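/- Type preservation of the CBN translation of the comonadic linear λ-calculus: if Γ ⊢_com e : τ, then ⟦Γ⟧n ⊢ ⟦e⟧n : ⟦τ⟧n in CBPV with coeffects. -/

import Mathlib

set_option autoImplicit false

/-- A preordered semiring of grades `(Q, +, 0, ·, 1, ≤co)`,
where `≤co` is a preorder respected by `+` and `·`. -/
structure CoSig (Q : Type) where
  add : Q → Q → Q
  zero : Q
  mul : Q → Q → Q
  one : Q
  le : Q → Q → Prop
  add_assoc : ∀ a b c, add (add a b) c = add a (add b c)
  add_comm : ∀ a b, add a b = add b a
  add_zero : ∀ a, add a zero = a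
  mul_assoc : ∀ a b c, mul (mul a b) c = mul a (mul b c)
  one_mul : ∀ a, mul one a = a
  mul_one : ∀ a, mul a one = a
  zero_mul : ∀ a, mul zero a = zero
  mul_zero : ∀ a, mul a zero = zero
  left_distrib : ∀ a b c, mul a (add b c) = add (mul a b) (mul a c)
  right_distrib : ∀ a b c, mul (add a b) c = add (mul a c) (mul b c)
  le_refl : ∀ a, le a a
  le_trans : ∀ a b c, le a b → le b c → le a c
  add_le_add : ∀ a b c d, le a b → le c d → le (add a c) (add b d)
  mul_le_mul : ∀ a b c d, le a b → le c d → le (mul a c) (mul b d)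

namespace CBPVCo

/-- Pointwise comparison of grade vectors: `γ₁ ≤co γ₂`. -/
def vle {Q : Type} (S : CoSig Q) (γ₁ γ₂ : List Q) : Prop := List.Forall₂ S.le γ₁ γ₂

/-- Pointwise addition of grade vectors. -/
def vadd {Q : Type} (S : CoSig Q) (γ₁ γ₂ : List Q) : List Q := List.zipWith S.add γ₁ γ₂

/-- Pointwise scaling of a grade vector: `q·γ`. -/
def vscale {Q : Type} (S : CoSig Q) (q : Q) (γ : List Q) : List Q := γ.map (S.mul q)

/-- `γ ≤co 0̄`: every entry of the grade vector is discardable. -/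
def leZero {Q : Type} (S : CoSig Q) (γ : List Q) : Prop := ∀ q ∈ γ, S.le q S.zero

mutual
/-- CBPV value types (coeffect version): `unit`, thunks `U B`, positive products. -/
inductive VTy (Q : Type) : Type where
  | unit : VTy Q
  | thunk : CTy Q → VTy Q
  | prod : VTy Q → VTy Q → VTy Q
/-- CBPV computation types (coeffect version): graded functions `A^q → B`,
graded returners `F_q A`, negative products. -/
inductive CTy (Q : Type) : Type where
  | arr : VTy Q → Q → CTy Q → CTy Q
  | F : Q → VTy Q → CTy Q
  | wth : CTy Q → CTy Q → CTy Q
end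

mutual
/-- CBPV values (de Bruijn indices for variables). -/
inductive Val (Q : Type) : Type where
  | var : Nat → Val Q
  | unit : Val Q
  | thunk : Comp Q → Val Q
  | pair : Val Q → Val Q → Val Q
/-- CBPV computations, with grade annotations on binders and on `return`. -/
inductive Comp (Q : Type) : Type where
  | lam : Q → Comp Q → Comp Q
  | app : Comp Q → Val Q → Comp Q
  | force : Val Q → Comp Q
  | split : Q → Val Q → Comp Q → Comp Q
  | cpair : Comp Q → Comp Q → Comp Q
  | fst : Comp Q → Comp Q
  | snd : Comp Q → Comp Q
  | ret : Q → Val Q → Comp Q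
  | letin : Q → Comp Q → Comp Q → Comp Q
end

mutual
/-- The value typing judgment `γ·Γ ⊢ V : A` of the CBPV type-and-coeffect system. -/
inductive VHasTy {Q : Type} (S : CoSig Q) : List Q → List (VTy Q) → Val Q → VTy Q → Prop where
  | var : ∀ {γ : List Q} {Γ : List (VTy Q)} {x : Nat} {q : Q} {A : VTy Q},
      γ.length = Γ.length → Γ[x]? = some A → γ[x]? = some q → S.le q S.one →
      (∀ (i : Nat) (q' : Q), i ≠ x → γ[i]? = some q' → S.le q' S.zero) →
      VHasTy S γ Γ (.var x) A
  | unit : ∀ {γ : List Q} {Γ : List (VTy Q)},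
      γ.length = Γ.length → leZero S γ → VHasTy S γ Γ .unit .unit
  | thunk : ∀ {γ : List Q} {Γ : List (VTy Q)} {M : Comp Q} {B : CTy Q},
      CHasTy S γ Γ M B → VHasTy S γ Γ (.thunk M) (.thunk B)
  | pair : ∀ {γ γ₁ γ₂ : List Q} {Γ : List (VTy Q)} {V₁ V₂ : Val Q} {A₁ A₂ : VTy Q},
      VHasTy S γ₁ Γ V₁ A₁ → VHasTy S γ₂ Γ V₂ A₂ → vle S γ (vadd S γ₁ γ₂) →
      VHasTy S γ Γ (.pair V₁ V₂) (.prod A₁ A₂)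

/-- The computation typing judgment `γ·Γ ⊢ M : B` of the CBPV type-and-coeffect system. -/
inductive CHasTy {Q : Type} (S : CoSig Q) : List Q → List (VTy Q) → Comp Q → CTy Q → Prop where
  | lam : ∀ {γ : List Q} {Γ : List (VTy Q)} {q : Q} {A : VTy Q} {M : Comp Q} {B : CTy Q},
      CHasTy S (q :: γ) (A :: Γ) M B → CHasTy S γ Γ (.lam q M) (.arr A q B)
  | app : ∀ {γ γ₁ γ₂ : List Q} {Γ : List (VTy Q)} {M : Comp Q} {V : Val Q}
      {A : VTy Q} {q : Q} {B : CTy Q},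
      CHasTy S γ₁ Γ M (.arr A q B) → VHasTy S γ₂ Γ V A →
      vle S γ (vadd S γ₁ (vscale S q γ₂)) → CHasTy S γ Γ (.app M V) B
  | force : ∀ {γ : List Q} {Γ : List (VTy Q)} {V : Val Q} {B : CTy Q},
      VHasTy S γ Γ V (.thunk B) → CHasTy S γ Γ (.force V) B
  | ret : ∀ {γ γ₁ : List Q} {Γ : List (VTy Q)} {q : Q} {V : Val Q} {A : VTy Q},
      VHasTy S γ₁ Γ V A → vle S γ (vscale S q γ₁) → CHasTy S γ Γ (.ret q V) (.F q A)
  | letin : ∀ {γ γ₁ γ₂ : List Q} {Γ : List (VTy Q)} {q₁ q₂ : Q} {M N : Comp Q}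
      {A : VTy Q} {B : CTy Q},
      CHasTy S γ₁ Γ M (.F q₁ A) → CHasTy S (S.mul q₁ q₂ :: γ₂) (A :: Γ) N B →
      vle S γ (vadd S (vscale S q₂ γ₁) γ₂) → CHasTy S γ Γ (.letin q₂ M N) B
  | split : ∀ {γ γ₁ γ₂ : List Q} {Γ : List (VTy Q)} {q : Q} {V : Val Q}
      {A₁ A₂ : VTy Q} {N : Comp Q} {B : CTy Q},
      VHasTy S γ₁ Γ V (.prod A₁ A₂) → CHasTy S (q :: q :: γ₂) (A₂ :: A₁ :: Γ) N B →
      vle S γ (vadd S (vscale S q γ₁) γ₂) → CHasTy S γ Γ (.split q V N) B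
  | cpair : ∀ {γ : List Q} {Γ : List (VTy Q)} {M₁ M₂ : Comp Q} {B₁ B₂ : CTy Q},
      CHasTy S γ Γ M₁ B₁ → CHasTy S γ Γ M₂ B₂ → CHasTy S γ Γ (.cpair M₁ M₂) (.wth B₁ B₂)
  | fst : ∀ {γ : List Q} {Γ : List (VTy Q)} {M : Comp Q} {B₁ B₂ : CTy Q},
      CHasTy S γ Γ M (.wth B₁ B₂) → CHasTy S γ Γ (.fst M) B₁
  | snd : ∀ {γ : List Q} {Γ : List (VTy Q)} {M : Comp Q} {B₁ B₂ : CTy Q},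
      CHasTy S γ Γ M (.wth B₁ B₂) → CHasTy S γ Γ (.snd M) B₂
end

/-- Lifting a de Bruijn renaming under one binder. -/
def liftRen (f : Nat → Nat) : Nat → Nat
  | 0 => 0
  | n + 1 => f n + 1

mutual
/-- Renaming of values. -/
def Val.rename {Q : Type} : Val Q → (Nat → Nat) → Val Q
  | .var x, f => .var (f x)
  | .unit, _ => .unit
  | .thunk M, f => .thunk (M.rename f)
  | .pair V₁ V₂, f => .pair (V₁.rename f) (V₂.rename f)
/-- Renaming of computations. -/
def Comp.rename {Q : Type} : Comp Q → (Nat → Nat) → Comp Q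
  | .lam q M, f => .lam q (M.rename (liftRen f))
  | .app M V, f => .app (M.rename f) (V.rename f)
  | .force V, f => .force (V.rename f)
  | .split q V N, f => .split q (V.rename f) (N.rename (liftRen (liftRen f)))
  | .cpair M₁ M₂, f => .cpair (M₁.rename f) (M₂.rename f)
  | .fst M, f => .fst (M.rename f)
  | .snd M, f => .snd (M.rename f)
  | .ret q V, f => .ret q (V.rename f)
  | .letin q M N, f => .letin q (M.rename f) (N.rename (liftRen f))
end

/-- Weakening: shift all free variables up by one. -/
def shift {Q : Type} (M : Comp Q) : Comp Q := M.rename Nat.succ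

/-- Weakening under one binder. -/
def shift1 {Q : Type} (M : Comp Q) : Comp Q := M.rename (liftRen Nat.succ)

/-- Weakening under two binders. -/
def shift2 {Q : Type} (M : Comp Q) : Comp Q := M.rename (liftRen (liftRen Nat.succ))

end CBPVCo

namespace LamCom

/-- Types of the comonadic linear λ-calculus: `unit`, linear functions `τ₁ ⊸ τ₂`,
and the graded comonadic type `□_q τ`. -/
inductive LTy (Q : Type) : Type where
  | unit : LTy Q
  | lolli : LTy Q → LTy Q → LTy Q
  | box : Q → LTy Q → LTy Q

/-- Terms of the comonadic linear λ-calculus (de Bruijn indices);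
`extend q q₁ e₁ e₂` is `extend_q x^{q₁} = e₁ in e₂`,
`divide q₁ q₂ e₁ e₂` is `divide x₁^{q₁}, x₂^{q₂} = e₁ in e₂`. -/
inductive LTm (Q : Type) : Type where
  | var : Nat → LTm Q
  | lam : LTm Q → LTm Q
  | app : LTm Q → LTm Q → LTm Q
  | unit : LTm Q
  | extract : LTm Q → LTm Q
  | extend : Q → Q → LTm Q → LTm Q → LTm Q
  | divide : Q → Q → LTm Q → LTm Q → LTm Q
  | discard : LTm Q → LTm Q → LTm Q

/-- Linear contexts: a position is `some τ` if the resource is available to the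
term at hand and `none` if it is used elsewhere. -/
abbrev LCtx (Q : Type) := List (Option (LTy Q))

/-- Linear splitting of a context between two subterms. -/
inductive Split {Q : Type} : LCtx Q → LCtx Q → LCtx Q → Prop where
  | nil : Split [] [] []
  | left : ∀ {Γ Γ₁ Γ₂ : LCtx Q} {τ : LTy Q},
      Split Γ Γ₁ Γ₂ → Split (some τ :: Γ) (some τ :: Γ₁) (none :: Γ₂)
  | right : ∀ {Γ Γ₁ Γ₂ : LCtx Q} {τ : LTy Q},
      Split Γ Γ₁ Γ₂ → Split (some τ :: Γ) (none :: Γ₁) (some τ :: Γ₂)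
  | none : ∀ {Γ Γ₁ Γ₂ : LCtx Q},
      Split Γ Γ₁ Γ₂ → Split (none :: Γ) (none :: Γ₁) (none :: Γ₂)

/-- The typing judgment `Γ ⊢_com e : τ` of the comonadic linear λ-calculus. -/
inductive HasTy {Q : Type} (S : CoSig Q) : LCtx Q → LTm Q → LTy Q → Prop where
  | var : ∀ {Γ : LCtx Q} {x : Nat} {τ : LTy Q},
      Γ[x]? = some (some τ) →
      (∀ (i : Nat) (o : Option (LTy Q)), i ≠ x → Γ[i]? = some o → o = none) →
      HasTy S Γ (.var x) τ
  | lam : ∀ {Γ : LCtx Q} {e : LTm Q} {τ₁ τ₂ : LTy Q},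
      HasTy S (some τ₁ :: Γ) e τ₂ → HasTy S Γ (.lam e) (.lolli τ₁ τ₂)
  | app : ∀ {Γ Γ₁ Γ₂ : LCtx Q} {e₁ e₂ : LTm Q} {τ₁ τ₂ : LTy Q},
      Split Γ Γ₁ Γ₂ → HasTy S Γ₁ e₁ (.lolli τ₁ τ₂) → HasTy S Γ₂ e₂ τ₁ →
      HasTy S Γ (.app e₁ e₂) τ₂
  | unit : ∀ {Γ : LCtx Q}, (∀ o ∈ Γ, o = none) → HasTy S Γ .unit .unit
  | extract : ∀ {Γ : LCtx Q} {e : LTm Q} {q : Q} {τ : LTy Q},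
      HasTy S Γ e (.box q τ) → S.le q S.one → HasTy S Γ (.extract e) τ
  | extend : ∀ {Γ : LCtx Q} {q q₁ q₁' : Q} {e₁ e₂ : LTm Q} {τ₁ τ₂ : LTy Q},
      HasTy S Γ e₁ (.box q₁' τ₁) → S.le q₁' (S.mul q q₁) →
      HasTy S (some (.box q₁ τ₁) :: Γ.map (fun _ => none)) e₂ τ₂ →
      HasTy S Γ (.extend q q₁ e₁ e₂) (.box q τ₂)
  | divide : ∀ {Γ Γ₁ Γ₂ : LCtx Q} {q q₁ q₂ : Q} {e₁ e₂ : LTm Q} {τ₁ τ₂ : LTy Q},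
      Split Γ Γ₁ Γ₂ → HasTy S Γ₁ e₁ (.box q τ₁) → S.le q (S.add q₁ q₂) →
      HasTy S (some (.box q₂ τ₁) :: some (.box q₁ τ₁) :: Γ₂) e₂ τ₂ →
      HasTy S Γ (.divide q₁ q₂ e₁ e₂) τ₂
  | discard : ∀ {Γ Γ₁ Γ₂ : LCtx Q} {q : Q} {e₁ e₂ : LTm Q} {τ₁ τ₂ : LTy Q},
      Split Γ Γ₁ Γ₂ → HasTy S Γ₁ e₁ (.box q τ₁) → S.le q S.zero →
      HasTy S Γ₂ e₂ τ₂ → HasTy S Γ (.discard e₁ e₂) τ₂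

end LamCom

open CBPVCo LamCom

/-- CBN translation of comonadic-linear source types into CBPV computation
types; the graded comonadic type is translated as `⟦□_q τ⟧n = F_q (U ⟦τ⟧n)`. -/
def tyTransN {Q : Type} (S : CoSig Q) : LTy Q → CTy Q
  | .unit => .F S.one .unit
  | .lolli τ₁ τ₂ => .arr (.thunk (tyTransN S τ₁)) S.one (tyTransN S τ₂)
  | .box q τ => .F q (.thunk (tyTransN S τ))

/-- CBN translation of comonadic-linear source terms into CBPV computations. -/
def tmTransN {Q : Type} (S : CoSig Q) : LTm Q → Comp Q
  | .var x => .force (.var x)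
  | .lam e => .lam S.one (tmTransN S e)
  | .app e₁ e₂ => .app (tmTransN S e₁) (.thunk (tmTransN S e₂))
  | .unit => .ret S.one .unit
  | .extract e => .letin S.one (tmTransN S e) (.force (.var 0))
  | .extend q q₁ e₁ e₂ =>
      .letin S.one (tmTransN S e₁)
        (.ret q (.thunk (.letin S.one (.ret S.one (.thunk (.ret q₁ (.var 0))))
          (shift1 (tmTransN S e₂)))))
  | .divide q₁ q₂ e₁ e₂ =>
      .letin S.one (tmTransN S e₁)
        (.letin S.one (.ret S.one (.thunk (.ret q₁ (.var 0))))
          (.letin S.one (.ret S.one (.thunk (.ret q₂ (.var 1))))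
            (shift2 (tmTransN S e₂))))
  | .discard e₁ e₂ => .letin S.one (tmTransN S e₁) (shift (tmTransN S e₂))

/-- Translation of context entries: a live assumption `x : τ` becomes
`x :^1 U ⟦τ⟧n`; a consumed position becomes a discardable dummy assumption
of grade `0`. -/
def ctxGrade {Q : Type} (S : CoSig Q) : Option (LTy Q) → Q
  | none => S.zero
  | some _ => S.one

def ctxTyN {Q : Type} (S : CoSig Q) : Option (LTy Q) → VTy Q
  | none => .unit
  | some τ => .thunk (tyTransN S τ)

namespace CBPVCo

theorem vle_refl {Q : Type} (S : CoSig Q) (γ : List Q) : vle S γ γ := by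
  induction γ with
  | nil => exact List.Forall₂.nil
  | cons a l ih => exact List.Forall₂.cons (S.le_refl a) ih

theorem vle_trans {Q : Type} (S : CoSig Q) {a b c : List Q} (h₁ : vle S a b) (h₂ : vle S b c) :
    vle S a c := by
  unfold vle at *
  induction h₁ generalizing c with
  | nil => exact h₂
  | cons h _ ih =>
    cases h₂ with
    | cons h' t' => exact List.Forall₂.cons (S.le_trans _ _ _ h h') (ih t')

theorem vle_get {Q : Type} (S : CoSig Q) {a b : List Q} (h : vle S a b) (i : Nat) (q : Q)
    (hq : a[i]? = some q) : ∃ q', b[i]? = some q' ∧ S.le q q' := by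
  unfold vle at h
  induction h generalizing i with
  | nil => simp at hq
  | cons h _ ih =>
    cases i with
    | zero => simp at hq; subst hq; exact ⟨_, by simp, h⟩
    | succ i => simp at hq; simpa using ih i hq

theorem vle_get' {Q : Type} (S : CoSig Q) {a b : List Q} (h : vle S a b) (i : Nat) (q : Q)
    (hq : b[i]? = some q) : ∃ q', a[i]? = some q' ∧ S.le q' q := by
  unfold vle at h
  induction h generalizing i with
  | nil => simp at hq
  | cons h _ ih =>
    cases i with
    | zero => simp at hq; subst hq; exact ⟨_, by simp, h⟩
    | succ i => simp at hq; simpa using ih i hq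

theorem vle_length {Q : Type} (S : CoSig Q) {a b : List Q} (h : vle S a b) :
    a.length = b.length := List.Forall₂.length_eq h

mutual
theorem VHasTy.sub {Q : Type} {S : CoSig Q} {γ γ' : List Q} {Γ : List (VTy Q)} {V : Val Q}
    {A : VTy Q} (h : VHasTy S γ Γ V A) (hle : vle S γ' γ) : VHasTy S γ' Γ V A := by
  cases h with
  | var hl hA hq h1 h0 =>
    obtain ⟨q', e, l⟩ := vle_get' S hle _ _ hq
    refine .var ((vle_length S hle).trans hl) hA e (S.le_trans _ _ _ l h1) ?_
    intro i p hi hp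
    obtain ⟨p', e', l'⟩ := vle_get S hle _ _ hp
    exact S.le_trans _ _ _ l' (h0 i p' hi e')
  | unit hl h0 =>
    refine .unit ((vle_length S hle).trans hl) ?_
    intro p hp
    obtain ⟨i, hi⟩ := List.mem_iff_getElem?.1 hp
    obtain ⟨p', e', l'⟩ := vle_get S hle _ _ hi
    exact S.le_trans _ _ _ l' (h0 p' (List.mem_iff_getElem?.2 ⟨i, e'⟩))
  | thunk h => exact .thunk (h.sub hle)
  | pair h₁ h₂ h => exact .pair h₁ h₂ (vle_trans S hle h)

theorem CHasTy.sub {Q : Type} {S : CoSig Q} {γ γ' : List Q} {Γ : List (VTy Q)} {M : Comp Q}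
    {B : CTy Q} (h : CHasTy S γ Γ M B) (hle : vle S γ' γ) : CHasTy S γ' Γ M B := by
  cases h with
  | lam h => exact .lam (h.sub (List.Forall₂.cons (S.le_refl _) hle))
  | app h₁ h₂ h => exact .app h₁ h₂ (vle_trans S hle h)
  | force h => exact .force (h.sub hle)
  | ret h₁ h => exact .ret h₁ (vle_trans S hle h)
  | letin h₁ h₂ h => exact .letin h₁ h₂ (vle_trans S hle h)
  | split h₁ h₂ h => exact .split h₁ h₂ (vle_trans S hle h)
  | cpair h₁ h₂ => exact .cpair (h₁.sub hle) (h₂.sub hle)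
  | fst h => exact .fst (h.sub hle)
  | snd h => exact .snd (h.sub hle)
end

/-- Insertion of an entry at a position. -/
def ins {α : Type} (a : α) : Nat → List α → List α
  | 0, l => a :: l
  | _ + 1, [] => []
  | n + 1, b :: l => b :: ins a n l

/-- The renaming that skips position `n`. -/
def skip : Nat → Nat → Nat
  | 0 => Nat.succ
  | n + 1 => liftRen (skip n)

theorem ins_get {α : Type} (a : α) (n : Nat) (l : List α) (x : Nat) :
    (ins a n l)[skip n x]? = l[x]? := by
  induction n generalizing l x with
  | zero => simp [ins, skip]
  | succ n ih =>
    cases l with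
    | nil => simp [ins]
    | cons b l => cases x <;> simp [ins, skip, liftRen, ih]

theorem ins_get_inv {α : Type} (a : α) (n : Nat) (l : List α) (i : Nat) (b : α)
    (h : (ins a n l)[i]? = some b) : b = a ∨ ∃ j, i = skip n j ∧ l[j]? = some b := by
  induction n generalizing l i with
  | zero =>
    cases i with
    | zero => left; simpa [ins, eq_comm] using h
    | succ i => right; exact ⟨i, rfl, by simpa [ins] using h⟩
  | succ n ih =>
    cases l with
    | nil => simp [ins] at h
    | cons c l =>
      cases i with
      | zero => right; exact ⟨0, rfl, by simpa [ins] using h⟩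
      | succ i =>
        rcases ih l i (by simpa [ins] using h) with h | ⟨j, rfl, hj⟩
        · exact .inl h
        · exact .inr ⟨j + 1, rfl, by simpa using hj⟩

theorem ins_length {α β : Type} (a : α) (b : β) (n : Nat) (l : List α) (m : List β)
    (h : l.length = m.length) : (ins a n l).length = (ins b n m).length := by
  induction n generalizing l m with
  | zero => simpa [ins] using h
  | succ n ih =>
    cases l <;> cases m <;> simp [ins] at h ⊢
    exact ih _ _ h

theorem ins_vscale {Q : Type} (S : CoSig Q) (q : Q) (n : Nat) (γ : List Q) :
    vscale S q (ins S.zero n γ) = ins S.zero n (vscale S q γ) := by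
  induction n generalizing γ with
  | zero => simp [ins, vscale, S.mul_zero]
  | succ n ih => cases γ <;> simp_all [ins, vscale]

theorem ins_vadd {Q : Type} (S : CoSig Q) (n : Nat) (γ₁ γ₂ : List Q) :
    vadd S (ins S.zero n γ₁) (ins S.zero n γ₂) = ins S.zero n (vadd S γ₁ γ₂) := by
  induction n generalizing γ₁ γ₂ with
  | zero => simp [ins, vadd, S.add_zero]
  | succ n ih => cases γ₁ <;> cases γ₂ <;> simp_all [ins, vadd]

theorem ins_vle {Q : Type} (S : CoSig Q) (n : Nat) {γ₁ γ₂ : List Q} (h : vle S γ₁ γ₂) :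
    vle S (ins S.zero n γ₁) (ins S.zero n γ₂) := by
  unfold vle at *
  induction n generalizing γ₁ γ₂ with
  | zero => exact .cons (S.le_refl _) h
  | succ n ih =>
    cases h with
    | nil => exact .nil
    | cons h t => exact .cons h (ih t)

mutual
theorem VHasTy.weaken {Q : Type} {S : CoSig Q} {γ : List Q} {Γ : List (VTy Q)} {V : Val Q}
    {A : VTy Q} (C : VTy Q) (n : Nat) (h : VHasTy S γ Γ V A) :
    VHasTy S (ins S.zero n γ) (ins C n Γ) (V.rename (skip n)) A := by
  cases h with
  | var hl hA hq h1 h0 =>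
    rw [Val.rename]
    refine .var (ins_length _ _ _ _ _ hl) (by rw [ins_get]; exact hA)
      (by rw [ins_get]; exact hq) h1 ?_
    intro i p hi hp
    rcases ins_get_inv _ _ _ _ _ hp with rfl | ⟨j, rfl, hj⟩
    · exact S.le_refl _
    · exact h0 j p (fun e => hi (by rw [e])) hj
  | unit hl h0 =>
    rw [Val.rename]
    refine .unit (ins_length _ _ _ _ _ hl) ?_
    intro p hp
    obtain ⟨i, hi⟩ := List.mem_iff_getElem?.1 hp
    rcases ins_get_inv _ _ _ _ _ hi with rfl | ⟨j, rfl, hj⟩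
    · exact S.le_refl _
    · exact h0 p (List.mem_iff_getElem?.2 ⟨j, hj⟩)
  | thunk h => rw [Val.rename]; exact .thunk (h.weaken C n)
  | pair h₁ h₂ h =>
    rw [Val.rename]
    exact .pair (h₁.weaken C n) (h₂.weaken C n) (by rw [ins_vadd]; exact ins_vle S n h)

theorem CHasTy.weaken {Q : Type} {S : CoSig Q} {γ : List Q} {Γ : List (VTy Q)} {M : Comp Q}
    {B : CTy Q} (C : VTy Q) (n : Nat) (h : CHasTy S γ Γ M B) :
    CHasTy S (ins S.zero n γ) (ins C n Γ) (M.rename (skip n)) B := by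
  cases h with
  | lam h => rw [Comp.rename]; exact .lam (h.weaken C (n + 1))
  | app h₁ h₂ h =>
    rw [Comp.rename]
    exact .app (h₁.weaken C n) (h₂.weaken C n)
      (by rw [ins_vscale, ins_vadd]; exact ins_vle S n h)
  | force h => rw [Comp.rename]; exact .force (h.weaken C n)
  | ret h₁ h =>
    rw [Comp.rename]
    exact .ret (h₁.weaken C n) (by rw [ins_vscale]; exact ins_vle S n h)
  | letin h₁ h₂ h =>
    rw [Comp.rename]
    exact .letin (h₁.weaken C n) (h₂.weaken C (n + 1))
      (by rw [ins_vscale, ins_vadd]; exact ins_vle S n h)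
  | split h₁ h₂ h =>
    rw [Comp.rename]
    exact .split (h₁.weaken C n) (h₂.weaken C (n + 2))
      (by rw [ins_vscale, ins_vadd]; exact ins_vle S n h)
  | cpair h₁ h₂ => rw [Comp.rename]; exact .cpair (h₁.weaken C n) (h₂.weaken C n)
  | fst h => rw [Comp.rename]; exact .fst (h.weaken C n)
  | snd h => rw [Comp.rename]; exact .snd (h.weaken C n)
end

/-- The zero grade vector of the length of a list. -/
def zs {Q α : Type} (S : CoSig Q) (l : List α) : List Q := l.map (fun _ => S.zero)

theorem vscale_one {Q : Type} (S : CoSig Q) (γ : List Q) : vscale S S.one γ = γ := by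
  induction γ <;> simp_all [vscale, S.one_mul]

theorem vscale_zs {Q α : Type} (S : CoSig Q) (q : Q) (l : List α) :
    vscale S q (zs S l) = zs S l := by
  induction l <;> simp_all [vscale, zs, S.mul_zero]

theorem zs_vadd {Q α : Type} (S : CoSig Q) (l : List α) (γ : List Q)
    (h : l.length = γ.length) : vadd S (zs S l) γ = γ := by
  induction l generalizing γ with
  | nil => cases γ <;> simp_all [vadd, zs]
  | cons a l ih =>
    cases γ <;> simp_all [vadd, zs]
    rw [S.add_comm, S.add_zero]

theorem vadd_zs {Q α : Type} (S : CoSig Q) (l : List α) (γ : List Q)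
    (h : l.length = γ.length) : vadd S γ (zs S l) = γ := by
  induction l generalizing γ with
  | nil => cases γ <;> simp_all [vadd, zs]
  | cons a l ih =>
    cases γ <;> simp_all [vadd, zs, S.add_zero]

/-- Compatibility of a CBPV context with a linear context. -/
def Compat {Q : Type} (S : CoSig Q) (Γ : LCtx Q) (Δ : List (VTy Q)) : Prop :=
  List.Forall₂ (fun o A => ∀ τ, o = some τ → A = VTy.thunk (tyTransN S τ)) Γ Δ

theorem Compat.self {Q : Type} (S : CoSig Q) (Γ : LCtx Q) : Compat S Γ (Γ.map (ctxTyN S)) := by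
  induction Γ with
  | nil => exact .nil
  | cons o Γ ih => exact .cons (by rintro τ rfl; rfl) ih

theorem Compat.none {Q : Type} {S : CoSig Q} {Γ : LCtx Q} {Δ : List (VTy Q)}
    (h : Compat S Γ Δ) : Compat S (Γ.map (fun _ => none)) Δ := by
  unfold Compat at *
  induction h with
  | nil => exact .nil
  | cons _ _ ih => exact .cons (by simp) ih

theorem split_compat {Q : Type} {S : CoSig Q} {Γ Γ₁ Γ₂ : LCtx Q} {Δ : List (VTy Q)}
    (s : Split Γ Γ₁ Γ₂) (h : Compat S Γ Δ) : Compat S Γ₁ Δ ∧ Compat S Γ₂ Δ := by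
  unfold Compat at *
  induction s generalizing Δ with
  | nil => exact ⟨h, h⟩
  | left _ ih | right _ ih | none _ ih =>
    cases h with
    | cons h t =>
      obtain ⟨a, b⟩ := ih t
      first
      | exact ⟨.cons h a, .cons (by simp) b⟩
      | exact ⟨.cons (by simp) a, .cons h b⟩

theorem split_grade {Q : Type} (S : CoSig Q) {Γ Γ₁ Γ₂ : LCtx Q} (s : Split Γ Γ₁ Γ₂) :
    vadd S (Γ₁.map (ctxGrade S)) (Γ₂.map (ctxGrade S)) = Γ.map (ctxGrade S) := by
  have hz : ∀ a, S.add S.zero a = a := fun a => by rw [S.add_comm, S.add_zero]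
  induction s <;> simp_all [vadd, ctxGrade, S.add_zero]

theorem split_vle {Q : Type} (S : CoSig Q) {Γ Γ₁ Γ₂ : LCtx Q} (s : Split Γ Γ₁ Γ₂) :
    vle S (Γ.map (ctxGrade S))
      (vadd S (vscale S S.one (Γ₁.map (ctxGrade S))) (Γ₂.map (ctxGrade S))) := by
  rw [vscale_one, split_grade S s]; exact vle_refl S _

theorem zs_get {Q α : Type} (S : CoSig Q) (l : List α) (i : Nat) (q : Q)
    (h : (zs S l)[i]? = some q) : q = S.zero := by
  unfold zs at h
  rw [List.getElem?_map, Option.map_eq_some_iff] at h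
  obtain ⟨_, _, h⟩ := h
  exact h.symm

theorem zs_length {Q α : Type} (S : CoSig Q) (l : List α) : (zs S l).length = l.length := by
  simp [zs]

/-- `x :^1, 0̄ ⊢ x`. -/
theorem var0 {Q : Type} (S : CoSig Q) (A : VTy Q) (Δ : List (VTy Q)) {q : Q}
    (hq : S.le q S.one) : VHasTy S (q :: zs S Δ) (A :: Δ) (.var 0) A := by
  refine .var (by simp [zs]) (by simp) (by simp) hq ?_
  intro i p hi hp
  cases i with
  | zero => exact absurd rfl hi
  | succ i => rw [zs_get S Δ i p (by simpa using hp)]; exact S.le_refl _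

/-- `_ :^0, x :^1, 0̄ ⊢ x`. -/
theorem var1 {Q : Type} (S : CoSig Q) (A C : VTy Q) (Δ : List (VTy Q)) :
    VHasTy S (S.zero :: S.one :: zs S Δ) (C :: A :: Δ) (.var 1) A := by
  have := (var0 S A Δ (S.le_refl _)).weaken C 0
  rwa [Val.rename] at this

theorem main_gen {Q : Type} (S : CoSig Q)
    {Γ : LCtx Q} {e : LTm Q} {τ : LTy Q} (h : LamCom.HasTy S Γ e τ) :
    ∀ Δ, Compat S Γ Δ →
    CHasTy S (Γ.map (ctxGrade S)) Δ (tmTransN S e) (tyTransN S τ) := by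
  induction h with
  | @var Γ x τ hx h0 =>
    intro Δ hc
    refine .force (.var (q := S.one) (by simpa using List.Forall₂.length_eq hc) ?_ ?_
      (S.le_refl _) ?_)
    · clear h0
      unfold Compat at hc
      induction hc generalizing x with
      | nil => simp at hx
      | cons h _ ih =>
        cases x with
        | zero => simp at hx; simp [h _ hx]
        | succ x => simpa using ih (by simpa using hx)
    · simp [hx, ctxGrade]
    · intro i p hi hp
      simp only [List.getElem?_map, Option.map_eq_some_iff] at hp
      obtain ⟨o, ho, rfl⟩ := hp
      rw [h0 i o hi ho]; exact S.le_refl _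
  | lam _ ih =>
    intro Δ hc
    exact .lam (ih (_ :: Δ) (.cons (by rintro τ ⟨⟩; rfl) hc))
  | app s _ _ ih₁ ih₂ =>
    intro Δ hc
    obtain ⟨c₁, c₂⟩ := split_compat s hc
    refine .app (ih₁ Δ c₁) (.thunk (ih₂ Δ c₂)) ?_
    rw [vscale_one, split_grade S s]; exact vle_refl S _
  | @unit Γ h0 =>
    intro Δ hc
    refine .ret (γ₁ := Γ.map (ctxGrade S)) (.unit (by simpa using List.Forall₂.length_eq hc) ?_)
      (by rw [vscale_one]; exact vle_refl S _)
    intro p hp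
    obtain ⟨o, ho, rfl⟩ := List.mem_map.1 hp
    rw [h0 o ho]; exact S.le_refl _
  | extract _ hq ih =>
    intro Δ hc
    have hl := List.Forall₂.length_eq hc
    refine .letin (γ₂ := zs S Δ) (ih Δ hc) (.force (var0 S _ Δ (by rw [S.mul_one]; exact hq))) ?_
    rw [vscale_one, vadd_zs S _ _ (by simpa using hl.symm)]
    exact vle_refl S _
  | @extend Γ q q₁ q₁' e₁ e₂ τ₁ τ₂ _ hq _ ih₁ ih₂ =>
    intro Δ hc
    have hl := List.Forall₂.length_eq hc
    have hz : (Γ.map (fun _ => (none : Option (LTy Q)))).map (ctxGrade S) = zs S Δ := by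
      unfold zs
      rw [List.map_map]
      simp [Function.comp_def, ctxGrade, List.map_const', hl]
    have k₂ := ih₂ (_ :: Δ) (.cons (by rintro τ ⟨⟩; rfl) hc.none)
    rw [List.map_cons, hz] at k₂
    have k₃ := k₂.weaken (.thunk (tyTransN S τ₁)) 1
    refine .letin (γ₂ := zs S Δ) (ih₁ Δ hc)
      (.ret (γ₁ := q₁ :: zs S Δ) (.thunk (.letin (γ₁ := q₁ :: zs S Δ) (γ₂ := S.zero :: zs S Δ)
        (.ret (γ₁ := q₁ :: zs S Δ) (.thunk (.ret (var0 S _ Δ (S.le_refl _)) ?_)) ?_)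
          (q₁ := S.one) ?_ ?_)) ?_) ?_
    · simp only [vscale, List.map_cons, S.mul_one]
      have := vscale_zs S q₁ Δ
      unfold vscale at this
      rw [this]; exact vle_refl S _
    · rw [vscale_one]; exact vle_refl S _
    · rw [S.mul_one]; exact k₃
    · rw [vscale_one]
      have := zs_vadd S Δ (zs S Δ) (zs_length S Δ).symm
      simp only [vadd, List.zipWith_cons_cons, S.add_zero] at this ⊢
      rw [this]; exact vle_refl S _
    · rw [S.mul_one]
      refine .cons hq ?_
      have := vscale_zs S q Δ
      unfold vscale at this
      rw [this]; exact vle_refl S _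
    · rw [vscale_one, vadd_zs S _ _ (by simpa using hl.symm)]
      exact vle_refl S _
  | @divide Γ Γ₁ Γ₂ q q₁ q₂ e₁ e₂ τ₁ τ₂ s _ hq _ ih₁ ih₂ =>
    intro Δ hc
    obtain ⟨c₁, c₂⟩ := split_compat s hc
    have hl := List.Forall₂.length_eq c₂
    have k₂ := ih₂ (_ :: _ :: Δ) (.cons (by rintro τ ⟨⟩; rfl) (.cons (by rintro τ ⟨⟩; rfl) c₂))
    have k₃ := k₂.weaken (.thunk (tyTransN S τ₁)) 2
    have ha := zs_vadd S Δ (Γ₂.map (ctxGrade S)) (by simpa using hl.symm)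
    have z0 : ∀ a, S.add S.zero a = a := fun a => by rw [S.add_comm, S.add_zero]
    refine .letin (γ₂ := Γ₂.map (ctxGrade S)) (ih₁ Δ c₁)
      (.letin (γ₁ := q₁ :: zs S Δ) (γ₂ := q₂ :: Γ₂.map (ctxGrade S)) (q₁ := S.one)
        (.ret (γ₁ := q₁ :: zs S Δ) (.thunk (.ret (var0 S _ Δ (S.le_refl _)) ?_)) ?_)
        (.letin (γ₁ := S.zero :: q₂ :: zs S Δ) (γ₂ := S.one :: S.zero :: Γ₂.map (ctxGrade S))
          (q₁ := S.one)
          (.ret (γ₁ := S.zero :: q₂ :: zs S Δ) (.thunk (.ret (var1 S _ _ Δ) ?_)) ?_)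
          (by rw [S.mul_one]; exact k₃) ?_) ?_) (split_vle S s)
    · have := vscale_zs S q₁ Δ
      unfold vscale at this
      simp only [vscale, List.map_cons, S.mul_one, this]
      exact vle_refl S _
    · rw [vscale_one]; exact vle_refl S _
    · have := vscale_zs S q₂ Δ
      unfold vscale at this
      simp only [vscale, List.map_cons, S.mul_one, S.mul_zero, this]
      exact vle_refl S _
    · rw [vscale_one]; exact vle_refl S _
    · rw [vscale_one, S.mul_one]
      simp only [vadd, List.zipWith_cons_cons, S.add_zero, z0] at ha ⊢
      rw [ha]; exact vle_refl S _
    · rw [vscale_one, S.mul_one]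
      simp only [vadd, List.zipWith_cons_cons] at ha ⊢
      rw [ha]; exact .cons hq (vle_refl S _)
  | discard s _ hq _ ih₁ ih₂ =>
    intro Δ hc
    obtain ⟨c₁, c₂⟩ := split_compat s hc
    refine .letin (ih₁ Δ c₁) (((ih₂ Δ c₂).weaken _ 0).sub (.cons ?_ (vle_refl S _)))
      (split_vle S s)
    rw [S.mul_one]; exact hq

end CBPVCo

/-- Type preservation of the CBN translation of the comonadic linear
λ-calculus: if `Γ ⊢_com e : τ`, then `⟦Γ⟧n ⊢ ⟦e⟧n : ⟦τ⟧n` in CBPV with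
coeffects, where every live assumption is used at grade `1`. -/
theorem comonadic_cbn_translation_preservation {Q : Type} (S : CoSig Q)
    {Γ : LCtx Q} {e : LTm Q} {τ : LTy Q} (h : LamCom.HasTy S Γ e τ) :
    CHasTy S (Γ.map (ctxGrade S)) (Γ.map (ctxTyN S)) (tmTransN S e) (tyTransN S τ) := by
  exact main_gen S h _ (Compat.self S Γ)
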